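/- arXiv:0912.2213 — 8 statements merged into one kernel-verified Lean document; each statement's English description precedes it below -/
import Mathlib

section
/- Let N, M be positive integers and let I_n^t, V_n^t (n, t ∈ ℤ) be complex numbers that are N-periodic in n (I_{n+N}^t = I_n^t, V_{n+N}^t = V_n^t). Then the following are equivalent: (a) for all n, t ∈ ℤ, I_n^{t+M} = I_n^t + V_n^t − V_{n−1}^{t+1} and V_n^{t+1}·I_n^{t+M} = I_{n+1}^t·V_n^t; (b) for all t ∈ ℤ and all nonzero y ∈ ℂ, L_{t+1}(y)·R_{t+M}(y) = R_t(y)·L_t(y). -/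
/-! Let `S` be the cyclic shift weighted by `y`, and write `diag f` for the diagonal matrix of an
`N`-periodic sequence `f`. Then `R = diag I + S`, `S * L = S + diag V`, and moving `S` past a
diagonal matrix shifts its sequence. Hence multiplying `L_{t+1} R_{t+M} - R_t L_t` on the left by
the invertible matrix `S` gives `S * diag a + diag b`, where the sequences `a` and `b` are the
defects of the two Toda equations and do not depend on `y`. If both vanish, the matrix equation
holds. Conversely, `S(1)` and `S(-1)` have opposite diagonals, so adding the diagonal parts of
`S(y) * diag a + diag b = 0` for `y = 1` and `y = -1` gives `b = 0`, and then `a = 0` because `S`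
is invertible. -/

open Matrix Finset Filter

/-- The matrix `L_t(y)`: `(n,n)`-entry `1`, `(n+1,n)`-entry `V_n^t` for `n = 1,…,N-1`,
`(1,N)`-entry `V_N^t / y` (indices written 1-based; here realized 0-based on `Fin N`). -/
noncomputable def Ltoda (N : ℕ) (V : ℤ → ℤ → ℂ) (t : ℤ) (y : ℂ) :
    Matrix (Fin N) (Fin N) ℂ := fun i j =>
  (if i = j then 1 else 0) +
  (if (i : ℕ) = (j : ℕ) + 1 then V ((j : ℕ) + 1) t else 0) +
  (if (i : ℕ) = 0 ∧ (j : ℕ) = N - 1 then V N t / y else 0)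

/-- The matrix `R_t(y)`: `(n,n)`-entry `I_n^t`, `(n,n+1)`-entry `1` for `n = 1,…,N-1`,
`(N,1)`-entry `y`. -/
noncomputable def Rtoda (N : ℕ) (I : ℤ → ℤ → ℂ) (t : ℤ) (y : ℂ) :
    Matrix (Fin N) (Fin N) ℂ := fun i j =>
  (if i = j then I ((i : ℕ) + 1) t else 0) +
  (if (j : ℕ) = (i : ℕ) + 1 then 1 else 0) +
  (if (i : ℕ) = N - 1 ∧ (j : ℕ) = 0 then y else 0)

/-- The shift matrix `S(y)`: `(n,n+1)`-entry `1` for `n = 1,…,N-1`, `(N,1)`-entry `y`. -/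
def Stoda (N : ℕ) (y : ℂ) : Matrix (Fin N) (Fin N) ℂ := fun i j =>
  (if (j : ℕ) = (i : ℕ) + 1 then 1 else 0) +
  (if (i : ℕ) = N - 1 ∧ (j : ℕ) = 0 then y else 0)

/-- `Rprod N I t y k = R_{t+k-1}(y) ⋯ R_{t+1}(y) · R_t(y)`. -/
noncomputable def Rprod (N : ℕ) (I : ℤ → ℤ → ℂ) (t : ℤ) (y : ℂ) :
    ℕ → Matrix (Fin N) (Fin N) ℂ
  | 0 => 1
  | k + 1 => Rtoda N I (t + k) y * Rprod N I t y k

/-- `X_t(y) = L_t(y) · R_{t+M-1}(y) ⋯ R_{t+1}(y) · R_t(y)`. -/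
noncomputable def Xtoda (N M : ℕ) (I V : ℤ → ℤ → ℂ) (t : ℤ) (y : ℂ) :
    Matrix (Fin N) (Fin N) ℂ :=
  Ltoda N V t y * Rprod N I t y M

/-- `(I, V)` is a solution of the hungry periodic discrete Toda equation `Toda_{N,M}`. -/
def IsToda (N M : ℕ) (I V : ℤ → ℤ → ℂ) : Prop :=
  ∀ n t : ℤ,
    I n (t + M) = I n t + V n t - V (n - 1) (t + 1) ∧
    V n (t + 1) * I n (t + M) = I (n + 1) t * V n t ∧
    I (n + N) t = I n t ∧ V (n + N) t = V n t

section RingIdentity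

variable {A : Type*} [Ring A]

lemma add_mul_add_sub_eq_of_semiconjBy {S U U₁ U' V V' W : A} (hU : SemiconjBy S U U₁)
    (hW : SemiconjBy S W V') :
    (S + V') * (U' + S) - (U₁ + S) * (S + V) = S * (U' + W - U - V) + (V' * U' - U₁ * V) := by
  have hsplit : (S + V') * (U' + S) - (U₁ + S) * (S + V) =
      S * U' + V' * S - U₁ * S - S * V + (V' * U' - U₁ * V) := by noncomm_ring
  rw [hsplit, ← hU.eq, ← hW.eq]
  noncomm_ring

end RingIdentity

section DiagonalPencil

variable {n R : Type*} [Fintype n] [DecidableEq n] [CommRing R]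

lemma diagonal_eq_zero_of_mul_diagonal_add_diagonal [IsAddTorsionFree R] {S T : Matrix n n R}
    (hS : IsUnit S) (hdiag : ∀ i, T i i = -S i i) {a b : n → R}
    (hSab : S * diagonal a + diagonal b = 0) (hTab : T * diagonal a + diagonal b = 0) :
    diagonal a = 0 ∧ diagonal b = 0 := by
  have entry {Q : Matrix n n R} (hQ : Q * diagonal a + diagonal b = 0) (i : n) :
      Q i i * a i + b i = 0 := by
    simpa only [Matrix.add_apply, mul_diagonal, diagonal_apply_eq, Matrix.zero_apply]
      using congr_fun₂ hQ i i
  have hb : diagonal b = 0 := by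
    refine diagonal_eq_zero.mpr (funext fun i => ?_)
    have hTi := entry hTab i
    rw [hdiag] at hTi
    refine self_eq_neg.mp ?_
    linear_combination entry hSab i + hTi
  rw [hb, add_zero, hS.mul_right_eq_zero] at hSab
  exact ⟨hSab, hb⟩

end DiagonalPencil

section PeriodDiagonal

variable {R : Type*} [NonAssocSemiring R] {N : ℕ}

/-- The diagonal matrix `diag(f₁, …, f_N)` cut out of a sequence `f` indexed by `ℤ`, with the entry
at `i : Fin N` being `f (i + 1)`. Bundling it as a ring homomorphism turns identities between
sequences into identities between matrices. -/
def periodDiagonal (N : ℕ) (R : Type*) [NonAssocSemiring R] :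
    (ℤ → R) →+* Matrix (Fin N) (Fin N) R :=
  (diagonalRingHom (Fin N) R).comp (RingHom.pi fun i => Pi.evalRingHom (fun _ => R) ((i : ℤ) + 1))

lemma periodDiagonal_apply (f : ℤ → R) :
    periodDiagonal N R f = diagonal fun i : Fin N => f ((i : ℤ) + 1) := rfl

lemma periodDiagonal_eq_zero_iff (hN : 0 < N) {f : ℤ → R} (hf : Function.Periodic f N) :
    periodDiagonal N R f = 0 ↔ f = 0 := by
  refine ⟨fun h => funext fun n => ?_, fun h => by rw [h, map_zero]⟩
  obtain ⟨k, ⟨hk₁, hkN⟩, hfk⟩ := hf.exists_mem_Ico (by exact_mod_cast hN) n 1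
  have hfin := congr_fun (diagonal_eq_zero.mp (periodDiagonal_apply f ▸ h))
    ⟨(k - 1).toNat, by omega⟩
  rwa [Int.toNat_of_nonneg (by omega), sub_add_cancel, ← hfk] at hfin

end PeriodDiagonal

section Shift

variable {N : ℕ} {y : ℂ}

lemma Stoda_succ_mul_castSucc {m : ℕ} (A : Matrix (Fin (m + 1)) (Fin (m + 1)) ℂ) (i : Fin m)
    (j : Fin (m + 1)) : (Stoda (m + 1) y * A) i.castSucc j = A i.succ j := by
  have hrow (k : Fin (m + 1)) : Stoda (m + 1) y i.castSucc k = if k = i.succ then 1 else 0 := by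
    simp only [Stoda, Fin.ext_iff, Fin.val_castSucc, Fin.val_succ, Nat.add_sub_cancel, i.isLt.ne,
      false_and, if_false, add_zero]
  simp [mul_apply, hrow]

lemma Stoda_succ_mul_last {m : ℕ} (A : Matrix (Fin (m + 1)) (Fin (m + 1)) ℂ)
    (j : Fin (m + 1)) : (Stoda (m + 1) y * A) (Fin.last m) j = y * A 0 j := by
  have hrow (k : Fin (m + 1)) : Stoda (m + 1) y (Fin.last m) k = if k = 0 then y else 0 := by
    simp only [Stoda, Fin.ext_iff, Fin.val_last, Fin.val_zero, Nat.add_sub_cancel, k.isLt.ne,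
      true_and, if_false, zero_add]
  simp [mul_apply, hrow]

-- For `N ≥ 2` both sides vanish, and for `N = 1` the matrix is `(y)`.
lemma Stoda_neg_apply_self (i : Fin N) : Stoda N (-y) i i = -Stoda N y i i := by
  simp only [Stoda, Nat.left_eq_add, one_ne_zero, if_false, zero_add, neg_ite, neg_zero]

lemma semiconjBy_Stoda_periodDiagonal {f : ℤ → ℂ} (hf : Function.Periodic f N) :
    SemiconjBy (Stoda N y) (periodDiagonal N ℂ f) (periodDiagonal N ℂ fun n => f (n + 1)) := by
  rw [SemiconjBy]
  ext i j
  rw [periodDiagonal_apply, periodDiagonal_apply, mul_diagonal, diagonal_mul, mul_comm]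
  by_cases hsucc : (j : ℕ) = i + 1
  · simp [hsucc]
  by_cases hwrap : (i : ℕ) = N - 1 ∧ (j : ℕ) = 0
  · have hi : (i : ℤ) + 1 = N := by omega
    rw [hi, hwrap.2, Nat.cast_zero, add_comm (N : ℤ), hf, zero_add]
  · simp [Stoda, hsucc, hwrap]

lemma Rtoda_eq_periodDiagonal_add_Stoda (I : ℤ → ℤ → ℂ) (t : ℤ) :
    Rtoda N I t y = periodDiagonal N ℂ (I · t) + Stoda N y := by
  ext i j
  simp only [Rtoda, Stoda, periodDiagonal_apply, Matrix.add_apply, diagonal_apply, add_assoc]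

lemma Stoda_mul_Ltoda (V : ℤ → ℤ → ℂ) (t : ℤ) (hy : y ≠ 0) :
    Stoda N y * Ltoda N V t y = Stoda N y + periodDiagonal N ℂ (V · t) := by
  cases N with
  | zero => exact Subsingleton.elim _ _
  | succ m =>
    ext i j
    rw [periodDiagonal_apply, Matrix.add_apply, diagonal_apply]
    induction i using Fin.lastCases with
    | last =>
      rw [Stoda_succ_mul_last]
      simp only [Ltoda, Stoda, Fin.ext_iff, Fin.val_last, Fin.val_zero, Nat.add_sub_cancel,
        j.isLt.ne, (Nat.succ_ne_zero _).symm, true_and, if_false, zero_add, add_zero, mul_add,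
        mul_ite, mul_one, mul_zero, mul_div_cancel₀ _ hy, Nat.cast_succ, eq_comm (a := 0),
        eq_comm (a := m)]
    | cast i =>
      rw [Stoda_succ_mul_castSucc]
      simp only [Ltoda, Stoda, Fin.ext_iff, Fin.val_castSucc, Fin.val_succ, Nat.add_sub_cancel,
        i.isLt.ne, (Nat.succ_ne_zero (i : ℕ)), false_and, if_false, add_zero,
        eq_comm (a := (i : ℕ) + 1) (b := (j : ℕ)), Nat.add_right_cancel_iff]
      by_cases hij : (i : ℕ) = j <;> simp only [hij, if_true, if_false]

lemma isUnit_Stoda (hy : y ≠ 0) : IsUnit (Stoda N y) := by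
  -- For `V = 1` the identity `S * L = S + diag V` reads `S * (L - 1) = 1`.
  refine IsUnit.of_mul_eq_one (Ltoda N 1 0 y - 1) ?_
  rw [mul_sub, Stoda_mul_Ltoda 1 0 hy, mul_one, add_sub_cancel_left]
  exact map_one (periodDiagonal N ℂ)

lemma Stoda_mul_Rtoda {I : ℤ → ℤ → ℂ} {t : ℤ} (hI : Function.Periodic (I · t) N) :
    Stoda N y * Rtoda N I t y =
      (periodDiagonal N ℂ (fun n => I (n + 1) t) + Stoda N y) * Stoda N y := by
  rw [Rtoda_eq_periodDiagonal_add_Stoda, mul_add,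
    (semiconjBy_Stoda_periodDiagonal hI).eq, add_mul]

end Shift

section Defects

/-- The defect, in the variable `n`, of `I_n^s = I_n^t + V_n^t - V_{n-1}^{t+1}`, the additive Toda
equation with `s` in place of `t + M`. -/
def sumDefect (I V : ℤ → ℤ → ℂ) (t s : ℤ) : ℤ → ℂ :=
  fun n => I n s + V (n - 1) (t + 1) - I n t - V n t

/-- The defect, in the variable `n`, of `V_n^{t+1} I_n^s = I_{n+1}^t V_n^t`, the multiplicative Toda
equation with `s` in place of `t + M`. -/
def productDefect (I V : ℤ → ℤ → ℂ) (t s : ℤ) : ℤ → ℂ :=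
  fun n => V n (t + 1) * I n s - I (n + 1) t * V n t

variable {N : ℕ} {I V : ℤ → ℤ → ℂ} (t s : ℤ)

lemma toda_iff_defects_eq_zero :
    (∀ n, I n s = I n t + V n t - V (n - 1) (t + 1) ∧ V n (t + 1) * I n s = I (n + 1) t * V n t) ↔
      sumDefect I V t s = 0 ∧ productDefect I V t s = 0 := by
  simp only [funext_iff, ← forall_and, sumDefect, productDefect, Pi.zero_apply]
  refine forall_congr' fun n => and_congr ?_ sub_eq_zero.symm
  rw [sub_sub, sub_eq_zero, eq_sub_iff_add_eq]

lemma sumDefect_periodic (hI : ∀ t, Function.Periodic (I · t) N)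
    (hV : ∀ t, Function.Periodic (V · t) N) :
    Function.Periodic (sumDefect I V t s) N := fun n => by
  simp only [sumDefect, add_sub_right_comm n, hI _ _, hV _ _]

lemma productDefect_periodic (hI : ∀ t, Function.Periodic (I · t) N)
    (hV : ∀ t, Function.Periodic (V · t) N) :
    Function.Periodic (productDefect I V t s) N := fun n => by
  simp only [productDefect, add_right_comm n N 1, hI _ _, hV _ _]

lemma Stoda_mul_lax_sub_eq_pencil (hI : Function.Periodic (I · t) N)
    (hV : Function.Periodic (V · (t + 1)) N) {y : ℂ} (hy : y ≠ 0) :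
    Stoda N y * (Ltoda N V (t + 1) y * Rtoda N I s y - Rtoda N I t y * Ltoda N V t y) =
      Stoda N y * periodDiagonal N ℂ (sumDefect I V t s) +
        periodDiagonal N ℂ (productDefect I V t s) := by
  have hW : SemiconjBy (Stoda N y) (periodDiagonal N ℂ fun n => V (n - 1) (t + 1))
      (periodDiagonal N ℂ (V · (t + 1))) := by
    simpa only [add_sub_cancel_right] using
      semiconjBy_Stoda_periodDiagonal (y := y) (hV.sub_const 1)
  calc _ = (Stoda N y * Ltoda N V (t + 1) y) * Rtoda N I s y -
        (Stoda N y * Rtoda N I t y) * Ltoda N V t y := by noncomm_ring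
    _ = (Stoda N y + periodDiagonal N ℂ (V · (t + 1))) *
          (periodDiagonal N ℂ (I · s) + Stoda N y) -
        (periodDiagonal N ℂ (fun n => I (n + 1) t) + Stoda N y) *
          (Stoda N y + periodDiagonal N ℂ (V · t)) := by
      rw [Stoda_mul_Ltoda _ _ hy, Stoda_mul_Rtoda hI, mul_assoc _ (Stoda N y) (Ltoda N V t y),
        Stoda_mul_Ltoda _ _ hy, Rtoda_eq_periodDiagonal_add_Stoda I s]
    _ = _ := by
      rw [add_mul_add_sub_eq_of_semiconjBy (semiconjBy_Stoda_periodDiagonal hI) hW]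
      simp only [← map_mul, ← map_add, ← map_sub]
      rfl

lemma lax_iff_pencil_eq_zero (hI : Function.Periodic (I · t) N)
    (hV : Function.Periodic (V · (t + 1)) N) {y : ℂ} (hy : y ≠ 0) :
    Ltoda N V (t + 1) y * Rtoda N I s y = Rtoda N I t y * Ltoda N V t y ↔
      Stoda N y * periodDiagonal N ℂ (sumDefect I V t s) +
        periodDiagonal N ℂ (productDefect I V t s) = 0 := by
  rw [← Stoda_mul_lax_sub_eq_pencil t s hI hV hy, (isUnit_Stoda hy).mul_right_eq_zero, sub_eq_zero]

end Defects

theorem stmt0_general (N : ℕ) (hN : 0 < N) (I V : ℤ → ℤ → ℂ)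
    (hIper : ∀ n t : ℤ, I (n + N) t = I n t) (hVper : ∀ n t : ℤ, V (n + N) t = V n t) (t s : ℤ) :
    (∀ n : ℤ,
        I n s = I n t + V n t - V (n - 1) (t + 1) ∧ V n (t + 1) * I n s = I (n + 1) t * V n t) ↔
    (∀ y : ℂ, y ≠ 0 →
        Ltoda N V (t + 1) y * Rtoda N I s y = Rtoda N I t y * Ltoda N V t y) := by
  have hI (t : ℤ) : Function.Periodic (I · t) N := (hIper · t)
  have hV (t : ℤ) : Function.Periodic (V · t) N := (hVper · t)
  rw [toda_iff_defects_eq_zero,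
    ← periodDiagonal_eq_zero_iff hN (sumDefect_periodic t s hI hV),
    ← periodDiagonal_eq_zero_iff hN (productDefect_periodic t s hI hV)]
  constructor
  · rintro ⟨hsum, hproduct⟩ y hy
    rw [lax_iff_pencil_eq_zero t s (hI t) (hV (t + 1)) hy, hsum, hproduct, mul_zero, add_zero]
  · intro hlax
    have pencil {y : ℂ} (hy : y ≠ 0) :=
      (lax_iff_pencil_eq_zero t s (hI t) (hV (t + 1)) hy).mp (hlax y hy)
    exact diagonal_eq_zero_of_mul_diagonal_add_diagonal (isUnit_Stoda one_ne_zero)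
      Stoda_neg_apply_self (pencil one_ne_zero) (pencil (neg_ne_zero.mpr one_ne_zero))

/-- the hpdToda equations are equivalent to the matrix equation
`L_{t+1}(y) R_{t+M}(y) = R_t(y) L_t(y)` for all `t` and all nonzero `y`. -/
theorem stmt0 (N M : ℕ) (hN : 0 < N) (hM : 0 < M) (I V : ℤ → ℤ → ℂ)
    (hIper : ∀ n t : ℤ, I (n + N) t = I n t) (hVper : ∀ n t : ℤ, V (n + N) t = V n t) :
    (∀ n t : ℤ,
        I n (t + M) = I n t + V n t - V (n - 1) (t + 1) ∧
        V n (t + 1) * I n (t + M) = I (n + 1) t * V n t) ↔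
    (∀ (t : ℤ) (y : ℂ), y ≠ 0 →
        Ltoda N V (t + 1) y * Rtoda N I (t + M) y = Rtoda N I t y * Ltoda N V t y) :=
  forall_comm.trans <| forall_congr' fun t => stmt0_general N hN I V hIper hVper t (t + M)
end

section
/- Let I_n^t, V_n^t be a solution of the hpdToda equation. Then for all t ∈ ℤ and all nonzero y ∈ ℂ, X_{t+1}(y)·R_t(y) = R_t(y)·X_t(y). -/
/-!
Let `S` be the twisted cyclic shift. Then `R_t = I_t + S` and `L_t = 1 + S⁻¹ V_t`, where `I_t` and
`V_t` are periodic diagonal matrices, and conjugation by `S` moves the index of such a matrix by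
one. Comparing the diagonal terms and those in `S⁻¹`, the two Toda equations say exactly that
`L_{t+1} R_{t+M} = R_t L_t`. Multiplying this on the right by `R_{t+M-1} ⋯ R_t` gives the theorem.
-/

open Matrix Finset Filter

lemma one_add_inv_mul_mul_add_of_semiconjBy {A : Type*} [Semiring A] (S : Aˣ)
    {I I' J V V' W : A} (hI : SemiconjBy ↑S I J) (hV : SemiconjBy ↑S W V')
    (hadd : I' + W = I + V) (hmul : V' * I' = J * V) :
    (1 + ↑S⁻¹ * V') * (I' + ↑S) = (I + ↑S) * (1 + ↑S⁻¹ * V) := by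
  have hW : ↑S⁻¹ * V' * ↑S = W := by
    rw [mul_assoc, ← hV.eq, Units.inv_mul_cancel_left]
  have hJ : ↑S⁻¹ * V' * I' = I * ↑S⁻¹ * V := by
    rw [mul_assoc, hmul, ← mul_assoc, hI.units_inv_symm_left.eq]
  calc (1 + ↑S⁻¹ * V') * (I' + ↑S)
      = (I' + ↑S⁻¹ * V' * ↑S) + ↑S + ↑S⁻¹ * V' * I' := by
        rw [add_mul, one_mul, mul_add]; abel
    _ = (I + V) + ↑S + I * ↑S⁻¹ * V := by rw [hW, hJ, hadd]
    _ = (I + ↑S) * (1 + ↑S⁻¹ * V) := by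
        rw [mul_add, mul_one, add_mul I, Units.mul_inv_cancel_left, mul_assoc]; abel

section MonomialMatrix

variable {n R : Type*} [Fintype n] [DecidableEq n]

/-- The invertible monomial matrix attached to a permutation `σ` and weights `c`: the only nonzero
entry of row `i` is `c i`, in column `σ i`. -/
def monomialUnit [Semiring R] (σ : Equiv.Perm n) (c : n → Rˣ) : (Matrix n n R)ˣ where
  val := of fun i j => if σ i = j then ↑(c i) else 0
  inv := of fun i j => if σ j = i then ↑(c j)⁻¹ else 0
  val_inv := by
    ext i j
    by_cases h : i = j <;> simp [Matrix.mul_apply, Matrix.one_apply, h, eq_comm]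
  inv_val := by
    ext i j
    simp [Matrix.mul_apply, Matrix.one_apply, ← Equiv.eq_symm_apply, @eq_comm _ i j]

lemma coe_monomialUnit [Semiring R] (σ : Equiv.Perm n) (c : n → Rˣ) :
    (monomialUnit σ c : Matrix n n R) = of fun i j => if σ i = j then ↑(c i) else 0 := rfl

lemma coe_inv_monomialUnit [Semiring R] (σ : Equiv.Perm n) (c : n → Rˣ) :
    (↑(monomialUnit σ c)⁻¹ : Matrix n n R) = of fun i j => if σ j = i then ↑(c j)⁻¹ else 0 := rfl

lemma semiconjBy_monomialUnit_diagonal [CommSemiring R] (σ : Equiv.Perm n) (c : n → Rˣ)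
    (d : n → R) :
    SemiconjBy (monomialUnit σ c : Matrix n n R) (diagonal d) (diagonal (d ∘ σ)) := by
  ext i j
  by_cases h : σ i = j <;> simp [coe_monomialUnit, h, mul_comm]

end MonomialMatrix

lemma finRotate_apply_eq_iff {N : ℕ} {i j : Fin N} :
    finRotate N i = j ↔ (j : ℕ) = i + 1 ∨ (i : ℕ) = N - 1 ∧ (j : ℕ) = 0 := by
  cases N with
  | zero => exact i.elim0
  | succ m =>
    have hj := j.isLt
    simp only [Fin.ext_iff, coe_finRotate, Fin.val_last]
    split_ifs <;> omega

lemma apply_finRotate_add_one {α : Type*} {N : ℕ} {a : ℤ → α} (ha : Function.Periodic a N)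
    (i : Fin N) : a ((finRotate N i : ℕ) + 1) = a ((i : ℕ) + 1 + 1) := by
  rcases finRotate_apply_eq_iff.mp (rfl : finRotate N i = _) with h | ⟨hi, h⟩
  · rw [h, Nat.cast_succ]
  · have hN : (i : ℤ) + 1 = N := by omega
    rw [h, hN, Nat.cast_zero, zero_add, add_comm, ha]

section TwistedShift

variable {R : Type*}

/-- The shift matrix `S(y)` over any semiring, as a unit; over `ℂ` it is `Stoda N y`. -/
def twistedShift [Semiring R] (N : ℕ) (y : Rˣ) : (Matrix (Fin N) (Fin N) R)ˣ :=
  monomialUnit (finRotate N) fun i => if (i : ℕ) = N - 1 then y else 1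

/-- The diagonal matrix with entries `a 1, …, a N`, as a ring homomorphism in the sequence `a`. -/
def seqDiagonal [Semiring R] (N : ℕ) : (ℤ → R) →+* Matrix (Fin N) (Fin N) R :=
  (diagonalRingHom (Fin N) R).comp
    (RingHom.pi fun i : Fin N => Pi.evalRingHom (fun _ => R) ((i : ℤ) + 1))

lemma seqDiagonal_eq_diagonal [Semiring R] (N : ℕ) (a : ℤ → R) :
    seqDiagonal N a = diagonal fun i : Fin N => a ((i : ℕ) + 1) := rfl

lemma semiconjBy_twistedShift_seqDiagonal [CommSemiring R] {N : ℕ} (y : Rˣ) {a : ℤ → R}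
    (ha : Function.Periodic a N) :
    SemiconjBy (twistedShift N y : Matrix (Fin N) (Fin N) R) (seqDiagonal N a)
      (seqDiagonal N fun n => a (n + 1)) := by
  simp only [seqDiagonal_eq_diagonal, ← apply_finRotate_add_one ha]
  exact semiconjBy_monomialUnit_diagonal _ _ _

end TwistedShift

section Lax

variable {N M : ℕ} {I V : ℤ → ℤ → ℂ}

lemma coe_twistedShift (y : ℂˣ) :
    (twistedShift N y : Matrix (Fin N) (Fin N) ℂ) = Stoda N y := by
  ext i j
  simp only [twistedShift, coe_monomialUnit, of_apply, Stoda, finRotate_apply_eq_iff]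
  split_ifs <;> first | omega | simp

lemma Rtoda_eq_seqDiagonal_add_twistedShift (t : ℤ) (y : ℂˣ) :
    Rtoda N I t y = seqDiagonal N (I · t) + ↑(twistedShift N y) := by
  rw [coe_twistedShift]
  ext i j
  simp [Rtoda, seqDiagonal_eq_diagonal, Stoda, diagonal_apply, add_assoc]

lemma Ltoda_eq_one_add_inv_twistedShift_mul_seqDiagonal (t : ℤ) (y : ℂˣ) :
    Ltoda N V t y =
      1 + (↑(twistedShift N y)⁻¹ : Matrix (Fin N) (Fin N) ℂ) * seqDiagonal N (V · t) := by
  ext i j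
  have hj : (j : ℕ) = N - 1 → (j : ℤ) + 1 = N := by omega
  simp only [Ltoda, Matrix.add_apply, Matrix.one_apply, seqDiagonal_eq_diagonal, mul_diagonal,
    twistedShift, coe_inv_monomialUnit, of_apply, finRotate_apply_eq_iff, add_assoc]
  split_ifs <;> first | omega | simp_all [div_eq_inv_mul]

lemma IsToda.Ltoda_mul_Rtoda (h : IsToda N M I V) (t : ℤ) (y : ℂˣ) :
    Ltoda N V (t + 1) y * Rtoda N I (t + M) y = Rtoda N I t y * Ltoda N V t y := by
  have hI : Function.Periodic (I · t) (N : ℤ) := fun n => (h n t).2.2.1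
  have hV : Function.Periodic (V · (t + 1)) (N : ℤ) := fun n => (h n (t + 1)).2.2.2
  have hSI := semiconjBy_twistedShift_seqDiagonal y hI
  have hSV : SemiconjBy (twistedShift N y : Matrix (Fin N) (Fin N) ℂ)
      (seqDiagonal N fun n => V (n - 1) (t + 1)) (seqDiagonal N (V · (t + 1))) := by
    simpa only [add_sub_cancel_right] using
      semiconjBy_twistedShift_seqDiagonal y (hV.sub_const 1)
  have hadd : seqDiagonal N (I · (t + M)) + seqDiagonal N (fun n => V (n - 1) (t + 1)) =
      seqDiagonal N (I · t) + seqDiagonal N (V · t) := by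
    rw [← map_add, ← map_add]
    exact congrArg _ (funext fun n => eq_sub_iff_add_eq.mp (h n t).1)
  have hmul : seqDiagonal N (V · (t + 1)) * seqDiagonal N (I · (t + M)) =
      seqDiagonal N (fun n => I (n + 1) t) * seqDiagonal N (V · t) := by
    rw [← map_mul, ← map_mul]
    exact congrArg _ (funext fun n => (h n t).2.1)
  simpa only [Rtoda_eq_seqDiagonal_add_twistedShift,
    Ltoda_eq_one_add_inv_twistedShift_mul_seqDiagonal] using
    one_add_inv_mul_mul_add_of_semiconjBy _ hSI hSV hadd hmul

lemma Rprod_add_one_mul_Rtoda (t : ℤ) (y : ℂ) (k : ℕ) :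
    Rprod N I (t + 1) y k * Rtoda N I t y = Rprod N I t y (k + 1) := by
  induction k with
  | zero => simp [Rprod]
  | succ k ih =>
    have hk : t + 1 + (k : ℤ) = t + (k + 1 : ℕ) := by push_cast; ring
    rw [Rprod, mul_assoc, ih, hk, ← Rprod]

end Lax

/-- for a solution of hpdToda, `X_{t+1}(y) R_t(y) = R_t(y) X_t(y)`. -/
theorem stmt1 (N M : ℕ) (hN : 0 < N) (hM : 0 < M) (I V : ℤ → ℤ → ℂ)
    (hsol : IsToda N M I V) :
    ∀ (t : ℤ) (y : ℂ), y ≠ 0 →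
      Xtoda N M I V (t + 1) y * Rtoda N I t y = Rtoda N I t y * Xtoda N M I V t y := by
  intro t y hy
  lift y to ℂˣ using hy.isUnit
  calc Xtoda N M I V (t + 1) y * Rtoda N I t y
      = Ltoda N V (t + 1) y * Rprod N I t y (M + 1) := by
        rw [Xtoda, mul_assoc, Rprod_add_one_mul_Rtoda]
    _ = Ltoda N V (t + 1) y * Rtoda N I (t + M) y * Rprod N I t y M := by
        rw [Rprod, mul_assoc]
    _ = Rtoda N I t y * Xtoda N M I V t y := by
        rw [hsol.Ltoda_mul_Rtoda, mul_assoc, Xtoda]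
end

section
/- Let N, M be positive integers and let I_n^t, V_n^t (n, t ∈ ℤ) be arbitrary complex numbers, N-periodic in n. Then for every t ∈ ℤ and every nonzero y ∈ ℂ, det X_t(y) = (1 + (−1)^{N+1}·y^{−1}·∏_{n=1}^N V_n^t) · ∏_{j=0}^{M−1} (∏_{n=1}^N I_n^{t+j} + (−1)^{N+1}·y). -/
/-!
`L_t(y)ᵀ` and every `R_s(y)` have the form `diag(a) + diag(b) P`, where `P` is the permutation
matrix of a full cycle `σ`. Expanding the determinant in the rows gives one term for each set `s` of
rows taken from `diag(a)`. If `s` is neither empty nor everything, some `i ∉ s` has `σ i ∈ s`; then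
rows `i` and `σ i` are both multiples of the basis vector at `σ i`, so the term vanishes. The two
remaining terms are `sign σ * ∏ b` and `∏ a`.
-/

open Matrix Finset Filter

section RowExpansion

variable {ι R : Type*} [Fintype ι] [DecidableEq ι] [CommRing R]

lemma det_diagonal_mul_add_diagonal_mul (a b : ι → R) (A B : Matrix ι ι R) :
    (diagonal a * A + diagonal b * B).det =
      ∑ s : Finset ι, (∏ i, if i ∈ s then a i else b i) *
        (of fun i j => if i ∈ s then A i j else B i j).det := by
  refine (detRowAlternating.map_add_univ (diagonal a * A).row (diagonal b * B).row).trans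
    (Finset.sum_congr rfl fun s _ => ?_)
  refine Eq.trans (congrArg det (Matrix.ext fun i j => ?_)) (det_mul_column _ _)
  by_cases hi : i ∈ s <;> simp [Finset.piecewise, hi, Matrix.row]

end RowExpansion

section CyclicBidiag

variable {ι R : Type*} {σ : Equiv.Perm ι}

lemma exists_notMem_and_apply_mem_of_isCycleOn_univ [Finite ι] (hσ : σ.IsCycleOn Set.univ)
    {s : Set ι} (hne : s.Nonempty) (huniv : s ≠ Set.univ) : ∃ i ∉ s, σ i ∈ s := by
  by_contra! hmaps
  obtain ⟨j, hj⟩ := hne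
  obtain ⟨i, hi⟩ := (Set.ne_univ_iff_exists_notMem s).1 huniv
  obtain ⟨k, rfl⟩ := hσ.exists_pow_eq' Set.finite_univ (Set.mem_univ i) (Set.mem_univ j)
  have hcompl : Set.MapsTo σ sᶜ sᶜ := hmaps
  exact hcompl.perm_pow k hi hj

variable [Fintype ι] [DecidableEq ι] [CommRing R]

lemma det_ite_one_permMatrix_eq_zero (hσ : σ.IsCycleOn Set.univ) {s : Finset ι}
    (hne : s ≠ ∅) (huniv : s ≠ Finset.univ) :
    (of fun i j => if i ∈ s then (1 : Matrix ι ι R) i j else σ.permMatrix R i j).det = 0 := by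
  obtain ⟨i, hi, hσi⟩ : ∃ i ∉ s, σ i ∈ s :=
    exists_notMem_and_apply_mem_of_isCycleOn_univ hσ
      (Finset.coe_nonempty.2 (Finset.nonempty_iff_ne_empty.2 hne)) (mt Finset.coe_eq_univ.1 huniv)
  have hi_ne : i ≠ σ i := fun h => hi (h ▸ hσi)
  refine det_zero_of_row_eq hi_ne (funext fun j => ?_)
  simp [hi, hσi, Matrix.one_apply, PEquiv.toMatrix_apply, eq_comm]

/-- The matrix `diag(a) + diag(b) P` with `P` the permutation matrix of `σ`: it has diagonal `a`,
and `b i` is added to the entry `(i, σ i)`. For the rotation of `Fin N` this is an upper bidiagonal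
matrix with an additional entry in the lower left corner. -/
def cyclicBidiag (σ : Equiv.Perm ι) (a b : ι → R) : Matrix ι ι R :=
  diagonal a + diagonal b * σ.permMatrix R

lemma cyclicBidiag_apply (a b : ι → R) (i j : ι) :
    cyclicBidiag σ a b i j = (if i = j then a i else 0) + if σ i = j then b i else 0 := by
  simp [cyclicBidiag, diagonal_apply, PEquiv.toMatrix_apply, eq_comm]

theorem det_cyclicBidiag [Nonempty ι] (hσ : σ.IsCycleOn Set.univ) (a b : ι → R) :
    (cyclicBidiag σ a b).det = ∏ i, a i + Equiv.Perm.sign σ * ∏ i, b i := by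
  have hexpand := det_diagonal_mul_add_diagonal_mul a b 1 (σ.permMatrix R)
  rw [mul_one] at hexpand
  rw [cyclicBidiag, hexpand, Fintype.sum_eq_add Finset.univ ∅ Finset.univ_nonempty.ne_empty
    fun s hs => by rw [det_ite_one_permMatrix_eq_zero hσ hs.2 hs.1, mul_zero]]
  have hone : (of fun i j => (1 : Matrix ι ι R) i j) = 1 := rfl
  have hperm : (of fun i j => σ.permMatrix R i j) = σ.permMatrix R := rfl
  simp only [Finset.mem_univ, Finset.notMem_empty, if_true, if_false, hone, hperm, det_one,
    det_permutation, mul_one, mul_comm]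

end CyclicBidiag

section Lax

variable {ι R : Type*} [Fintype ι] [DecidableEq ι] [CommRing R]

/-- The Lax factor `L(y)` of the Toda lattice on the sites `ι`, cyclically ordered by `σ`: unit
diagonal, and entry `v i` at `(σ i, i)`, divided by the spectral parameter `y` at the last site
`o`. -/
def laxL (σ : Equiv.Perm ι) (o : ι) (v : ι → R) (y : Rˣ) : Matrix ι ι R :=
  (cyclicBidiag σ 1 (v * Pi.mulSingle o ↑y⁻¹))ᵀ

/-- The Lax factor `R(y)` of the Toda lattice on the sites `ι`, cyclically ordered by `σ`: diagonal
`a`, and entry `1` at `(i, σ i)`, multiplied by the spectral parameter `y` at the last site `o`. -/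
def laxR (σ : Equiv.Perm ι) (o : ι) (a : ι → R) (y : R) : Matrix ι ι R :=
  cyclicBidiag σ a (Pi.mulSingle o y)

variable {σ : Equiv.Perm ι}

lemma det_laxL (hσ : σ.IsCycleOn Set.univ) (o : ι) (v : ι → R) (y : Rˣ) :
    (laxL σ o v y).det = 1 + Equiv.Perm.sign σ * ↑y⁻¹ * ∏ i, v i := by
  have : Nonempty ι := ⟨o⟩
  rw [laxL, det_transpose, det_cyclicBidiag hσ]
  simp [Finset.prod_mul_distrib, mul_assoc, mul_comm]

lemma det_laxR (hσ : σ.IsCycleOn Set.univ) (o : ι) (a : ι → R) (y : R) :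
    (laxR σ o a y).det = ∏ i, a i + Equiv.Perm.sign σ * y := by
  have : Nonempty ι := ⟨o⟩
  rw [laxR, det_cyclicBidiag hσ]
  simp

lemma det_prod_reverse_map_range (A : ℕ → Matrix ι ι R) (M : ℕ) :
    ((List.range M).map A).reverse.prod.det = ∏ j ∈ Finset.range M, (A j).det := by
  induction M with
  | zero => simp
  | succ M ih => simp [List.range_succ, Finset.prod_range_succ, ih, mul_comm]

theorem stmt4_general (hσ : σ.IsCycleOn Set.univ) (o : ι) (v : ι → R) (a : ℕ → ι → R) (y : Rˣ)
    (M : ℕ) :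
    (laxL σ o v y * ((List.range M).map fun j => laxR σ o (a j) y).reverse.prod).det =
      (1 + Equiv.Perm.sign σ * ↑y⁻¹ * ∏ i, v i) *
        ∏ j ∈ Finset.range M, (∏ i, a j i + Equiv.Perm.sign σ * y) := by
  simp only [det_mul, det_prod_reverse_map_range, det_laxL hσ, det_laxR hσ]

end Lax

section Toda

lemma isCycleOn_finRotate : ∀ n : ℕ, (finRotate n).IsCycleOn Set.univ
  | 0 | 1 => Equiv.Perm.isCycleOn_of_subsingleton _ _
  | n + 2 => by
    have hmoved : {i | finRotate (n + 2) i ≠ i} = Set.univ :=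
      Set.eq_univ_of_forall fun i =>
        Equiv.Perm.mem_support.1 (support_finRotate ▸ Finset.mem_univ i)
    exact hmoved ▸ isCycle_finRotate.isCycleOn

lemma finRotate_succ_eq_iff {n : ℕ} (i j : Fin (n + 1)) :
    finRotate (n + 1) i = j ↔ (j : ℕ) = i + 1 ∨ (i : ℕ) = n ∧ (j : ℕ) = 0 := by
  simp only [Fin.ext_iff, coe_finRotate, Fin.val_last]
  split_ifs <;> omega

lemma cyclicBidiag_finRotate_apply {R : Type*} [CommRing R] {n : ℕ} (a b : Fin (n + 1) → R) (c : R)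
    (i j : Fin (n + 1)) :
    cyclicBidiag (finRotate (n + 1)) a (b * Pi.mulSingle (Fin.last n) c) i j =
      (if i = j then a i else 0) + (if (j : ℕ) = i + 1 then b i else 0) +
        if (i : ℕ) = n ∧ (j : ℕ) = 0 then b (Fin.last n) * c else 0 := by
  simp only [cyclicBidiag_apply, finRotate_succ_eq_iff, add_assoc, Pi.mul_apply]
  rcases eq_or_ne i (Fin.last n) with rfl | hi
  · have hj : (j : ℕ) ≠ n + 1 := by omega
    simp [hj]
  · have hi_val : (i : ℕ) ≠ n := fun h => hi (Fin.ext h)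
    simp [hi, hi_val]

lemma Ltoda_eq_laxL (n : ℕ) (V : ℤ → ℤ → ℂ) (t : ℤ) (y : ℂˣ) :
    Ltoda (n + 1) V t y =
      laxL (finRotate (n + 1)) (Fin.last n) (fun i => V ((i : ℕ) + 1) t) y := by
  ext i j
  rw [laxL, transpose_apply, cyclicBidiag_finRotate_apply]
  simp [Ltoda, div_eq_mul_inv, eq_comm (a := i), and_comm]

lemma Rtoda_eq_laxR (n : ℕ) (I : ℤ → ℤ → ℂ) (t : ℤ) (y : ℂ) :
    Rtoda (n + 1) I t y =
      laxR (finRotate (n + 1)) (Fin.last n) (fun i => I ((i : ℕ) + 1) t) y := by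
  ext i j
  rw [laxR, ← one_mul (Pi.mulSingle (Fin.last n) y : Fin (n + 1) → ℂ), cyclicBidiag_finRotate_apply]
  simp [Rtoda]

lemma Rprod_eq_prod_reverse_map_range (N : ℕ) (I : ℤ → ℤ → ℂ) (t : ℤ) (y : ℂ) (M : ℕ) :
    Rprod N I t y M = ((List.range M).map fun j : ℕ => Rtoda N I (t + j) y).reverse.prod := by
  induction M with
  | zero => simp [Rprod]
  | succ M ih => simp [Rprod, List.range_succ, ih]

lemma Xtoda_eq_laxL_mul_prod (n M : ℕ) (I V : ℤ → ℤ → ℂ) (t : ℤ) (y : ℂˣ) :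
    Xtoda (n + 1) M I V t y =
      laxL (finRotate (n + 1)) (Fin.last n) (fun i => V ((i : ℕ) + 1) t) y *
        ((List.range M).map fun j : ℕ => laxR (finRotate (n + 1)) (Fin.last n)
          (fun i => I ((i : ℕ) + 1) (t + j)) (y : ℂ)).reverse.prod := by
  simp only [Xtoda, Ltoda_eq_laxL, Rprod_eq_prod_reverse_map_range, Rtoda_eq_laxR]

end Toda

/-- the explicit formula for `det X_t(y)`. -/
theorem stmt4 (N M : ℕ) (hN : 0 < N) (hM : 0 < M) (I V : ℤ → ℤ → ℂ)
    (hIper : ∀ n t : ℤ, I (n + N) t = I n t) (hVper : ∀ n t : ℤ, V (n + N) t = V n t) :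
    ∀ (t : ℤ) (y : ℂ), y ≠ 0 →
      (Xtoda N M I V t y).det =
        (1 + (-1 : ℂ) ^ (N + 1) * y⁻¹ * ∏ n ∈ Finset.range N, V ((n : ℤ) + 1) t) *
          ∏ j ∈ Finset.range M,
            ((∏ n ∈ Finset.range N, I ((n : ℤ) + 1) (t + j)) + (-1 : ℂ) ^ (N + 1) * y) := by
  intro t y hy
  obtain ⟨n, rfl⟩ := Nat.exists_eq_add_one.2 hN
  lift y to ℂˣ using hy.isUnit
  rw [Xtoda_eq_laxL_mul_prod, stmt4_general (isCycleOn_finRotate _)]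
  simp [← Fin.prod_univ_eq_prod_range, pow_succ]
end

section
/- Let N, M be positive integers and let I_n^t, V_n^t (n, t ∈ ℤ) be complex numbers, N-periodic in n. Then for each t ∈ ℤ there exist diagonal N×N complex matrices γ_{−1}, γ_0, γ_1, …, γ_{M−1} (depending on the I's and V's but not on y) such that for every nonzero y ∈ ℂ, X_t(y) = γ_{−1}·S(y)^{−1} + γ_0 + γ_1·S(y) + ⋯ + γ_{M−1}·S(y)^{M−1} + S(y)^M. (Note that S(y) is invertible for y ≠ 0, since S(y)^N = y·E.) -/
/-!
Let `σ` be the cyclic shift of the indices, so that `S(y) · diag(d) = diag(d ∘ σ) · S(y)`. For every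
`y` the matrices `diag(d)` and `S(y)` thus satisfy the relation `X d = σ(d) X` of the skew
polynomial ring over the diagonal matrices, and a product of `k` factors `diag(d) + S(y)` is the
value at `S(y)` of a monic skew polynomial of degree `k`, which does not involve `y`. By periodicity
`R_t(y) · S(y) = S(y) · (diag(I_{n-1}^t) + S(y))` and `L_t(y) · S(y) = diag(V_{n-1}^t) + S(y)`.
Hence `X_t(y) · S(y)` is such a product with `M + 1` factors, and it remains to multiply by
`S(y)⁻¹` on the right.
-/

open Matrix Finset Filter

section SkewPolynomial

open Polynomial

variable {R A : Type*} [Semiring R] [Semiring A]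

/-- The product of the factors `d + X`, `d ∈ l`, in the skew polynomial ring `R[X; σ]`, where
`X * r = σ r * X`. It describes the products of factors `d + s` for all `s` subject to this
commutation rule at once. It is recorded by its left coefficients as an element of `R[X]`, whose own
multiplication is not the skew one. -/
noncomputable def skewProdAddX (σ : R →+* R) : List R → R[X]
  | [] => 1
  | d :: l => d • skewProdAddX σ l + (skewProdAddX σ l).map σ * X

theorem natDegree_skewProdAddX_le (σ : R →+* R) (l : List R) :
    (skewProdAddX σ l).natDegree ≤ l.length := by
  induction l with
  | nil => simp [skewProdAddX]
  | cons d l ih =>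
    have hd : (d • skewProdAddX σ l).natDegree ≤ l.length + 1 :=
      (natDegree_smul_le _ _).trans (ih.trans l.length.le_succ)
    have hX : ((skewProdAddX σ l).map σ * X).natDegree ≤ l.length + 1 :=
      natDegree_mul_le_of_le (natDegree_map_le.trans ih) natDegree_X_le
    exact natDegree_add_le_of_degree_le hd hX

theorem coeff_skewProdAddX_length (σ : R →+* R) (l : List R) :
    (skewProdAddX σ l).coeff l.length = 1 := by
  induction l with
  | nil => simp [skewProdAddX]
  | cons d l ih =>
    have hlow : (skewProdAddX σ l).coeff (l.length + 1) = 0 :=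
      coeff_eq_zero_of_natDegree_lt (Nat.lt_succ_of_le (natDegree_skewProdAddX_le σ l))
    simp [skewProdAddX, hlow, ih]

theorem mul_eval₂_eq_eval₂_map_mul {f : R →+* A} {σ : R →+* R} {s : A}
    (hs : ∀ r, s * f r = f (σ r) * s) (p : R[X]) :
    s * p.eval₂ f s = (p.map σ).eval₂ f s * s := by
  induction p using Polynomial.induction_on' with
  | add p q hp hq =>
    rw [eval₂_add, mul_add, hp, hq, Polynomial.map_add, eval₂_add, add_mul]
  | monomial n a =>
    rw [map_monomial, eval₂_monomial, eval₂_monomial, ← mul_assoc, hs, mul_assoc, mul_assoc,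
      pow_mul_comm']

theorem prod_map_add_eq_eval₂_skewProdAddX {f : R →+* A} {σ : R →+* R} {s : A}
    (hs : ∀ r, s * f r = f (σ r) * s) (l : List R) :
    (l.map fun d ↦ f d + s).prod = (skewProdAddX σ l).eval₂ f s := by
  induction l with
  | nil => simp [skewProdAddX]
  | cons d l ih =>
    rw [List.map_cons, List.prod_cons, ih, skewProdAddX, eval₂_add, eval₂_smul, eval₂_mul_X,
      ← mul_eval₂_eq_eval₂_map_mul hs, add_mul]

theorem prod_map_add_eq_sum_add_pow {f : R →+* A} {σ : R →+* R} {s : A}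
    (hs : ∀ r, s * f r = f (σ r) * s) (l : List R) :
    (l.map fun d ↦ f d + s).prod =
      ∑ i ∈ range l.length, f ((skewProdAddX σ l).coeff i) * s ^ i + s ^ l.length := by
  have hdeg : (skewProdAddX σ l).natDegree < l.length + 1 :=
    Nat.lt_succ_of_le (natDegree_skewProdAddX_le σ l)
  rw [prod_map_add_eq_eval₂_skewProdAddX hs, eval₂_eq_sum_range' f hdeg, sum_range_succ,
    coeff_skewProdAddX_length, map_one, one_mul]

theorem sum_range_succ_mul_pow_add_pow_mul {s s' : A} (h : s * s' = 1) (c : ℕ → A) (m : ℕ) :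
    (∑ i ∈ range (m + 1), c i * s ^ i + s ^ (m + 1)) * s' =
      c 0 * s' + ∑ i ∈ range m, c (i + 1) * s ^ i + s ^ m := by
  have hpow (i : ℕ) : s ^ (i + 1) * s' = s ^ i := by rw [pow_succ, mul_assoc, h, mul_one]
  simp only [add_mul, sum_range_succ', sum_mul, mul_assoc, hpow, pow_zero, one_mul]
  rw [add_comm (c 0 * s')]

end SkewPolynomial

theorem permMatrix_apply {n α : Type*} [DecidableEq n] [Zero α] [One α] (σ : Equiv.Perm n)
    (i j : n) : σ.permMatrix α i j = if σ i = j then 1 else 0 := by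
  simp [PEquiv.toMatrix_apply, Equiv.toPEquiv_apply, eq_comm]

theorem permMatrix_mul_diagonal {n α : Type*} [Fintype n] [DecidableEq n] [NonAssocSemiring α]
    (σ : Equiv.Perm n) (d : n → α) :
    σ.permMatrix α * diagonal d = diagonal (d ∘ σ) * σ.permMatrix α := by
  ext i j
  rw [mul_diagonal, diagonal_mul, permMatrix_apply, Function.comp_apply]
  split_ifs with h
  · rw [h, one_mul, mul_one]
  · rw [zero_mul, mul_zero]

theorem finRotate_eq_iff {N : ℕ} {i j : Fin N} :
    finRotate N i = j ↔ (j : ℕ) = i + 1 ∨ ((i : ℕ) = N - 1 ∧ (j : ℕ) = 0) := by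
  obtain _ | n := N
  · exact i.elim0
  · have hj := j.isLt
    simp only [Fin.ext_iff, coe_finRotate, Fin.val_last]
    split_ifs <;> omega

theorem periodic_apply_finRotate {N : ℕ} {α : Type*} {a : ℤ → α}
    (ha : Function.Periodic a N) (i : Fin N) : a (finRotate N i : ℕ) = a ((i : ℕ) + 1) := by
  obtain h | ⟨hi, h⟩ := finRotate_eq_iff.mp (Eq.refl (finRotate N i))
  · rw [h, Nat.cast_succ]
  · have hN : ((i : ℕ) : ℤ) + 1 = N := by omega
    rw [h, hN, Nat.cast_zero, ha.eq]

section Toda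

variable (N : ℕ)

theorem Stoda_eq_diagonal_mul_permMatrix (y : ℂ) :
    Stoda N y =
      diagonal (fun i : Fin N ↦ if (i : ℕ) = N - 1 then y else 1) *
        (finRotate N).permMatrix ℂ := by
  ext i j
  have hj := j.isLt
  have hij : (j : ℕ) = i + 1 → (i : ℕ) ≠ N - 1 := by omega
  simp only [diagonal_mul, permMatrix_apply, finRotate_eq_iff, Stoda]
  split_ifs <;> simp_all

theorem Stoda_mul_Stoda_inv_transpose {y : ℂ} (hy : y ≠ 0) :
    Stoda N y * (Stoda N y⁻¹)ᵀ = 1 := by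
  have hP : (finRotate N).permMatrix ℂ * ((finRotate N).permMatrix ℂ)ᵀ = 1 := by
    rw [transpose_permMatrix, ← permMatrix_mul, inv_mul_cancel, permMatrix_one]
  rw [Stoda_eq_diagonal_mul_permMatrix, Stoda_eq_diagonal_mul_permMatrix, transpose_mul,
    diagonal_transpose, Matrix.mul_assoc, ← Matrix.mul_assoc _ _ (diagonal _), hP, Matrix.one_mul,
    diagonal_mul_diagonal, ← diagonal_one]
  congr 1
  ext i
  split_ifs <;> simp [hy]

theorem Stoda_mul_diagonal (y : ℂ) (d : Fin N → ℂ) :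
    Stoda N y * diagonal d = diagonal (d ∘ finRotate N) * Stoda N y := by
  rw [Stoda_eq_diagonal_mul_permMatrix, Matrix.mul_assoc, permMatrix_mul_diagonal,
    ← Matrix.mul_assoc, ← Matrix.mul_assoc, (commute_diagonal _ _).eq]

variable {N} {I V : ℤ → ℤ → ℂ} {t : ℤ}

theorem Rtoda_mul_Stoda (hI : Function.Periodic (I · t) N) (y : ℂ) :
    Rtoda N I t y * Stoda N y =
      Stoda N y * (diagonal (fun i : Fin N ↦ I (i : ℕ) t) + Stoda N y) := by
  have hR : Rtoda N I t y = diagonal (fun i : Fin N ↦ I ((i : ℕ) + 1) t) + Stoda N y := by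
    ext i j
    simp only [Rtoda, Stoda, Matrix.add_apply, diagonal_apply, add_assoc]
  have hshift : (fun i : Fin N ↦ I (i : ℕ) t) ∘ finRotate N = fun i : Fin N ↦ I ((i : ℕ) + 1) t :=
    funext (periodic_apply_finRotate hI)
  rw [hR, Matrix.mul_add, Stoda_mul_diagonal, hshift, Matrix.add_mul]

theorem Ltoda_mul_Stoda (hV : Function.Periodic (V · t) N) {y : ℂ} (hy : y ≠ 0) :
    Ltoda N V t y * Stoda N y = diagonal (fun i : Fin N ↦ V (i : ℕ) t) + Stoda N y := by
  have hL : Ltoda N V t y = 1 + diagonal (fun i : Fin N ↦ V (i : ℕ) t) * (Stoda N y⁻¹)ᵀ := by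
    have hV0 : V 0 t = V N t := hV.eq.symm
    ext i j
    simp only [Ltoda, Stoda, Matrix.add_apply, one_apply, diagonal_mul, transpose_apply, add_assoc]
    congr 1
    by_cases h0 : (i : ℕ) = 0
    · simp [h0, hV0, and_comm, div_eq_mul_inv]
    · by_cases hij : (i : ℕ) = j + 1 <;> simp [h0, hij]
  rw [hL, Matrix.add_mul, Matrix.one_mul, Matrix.mul_assoc,
    mul_eq_one_comm.mp (Stoda_mul_Stoda_inv_transpose N hy), Matrix.mul_one, add_comm]

theorem Rprod_mul_Stoda (hI : ∀ u, Function.Periodic (I · u) N) (y : ℂ) (k : ℕ) :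
    Rprod N I t y k * Stoda N y =
      Stoda N y * (((List.range k).reverse.map fun (m : ℕ) (i : Fin N) ↦ I (i : ℕ) (t + m)).map
        fun d ↦ diagonal d + Stoda N y).prod := by
  induction k with
  | zero => simp [Rprod]
  | succ k ih =>
    rw [Rprod, Matrix.mul_assoc, ih, ← Matrix.mul_assoc, Rtoda_mul_Stoda (hI _), List.range_succ,
      List.reverse_concat, List.map_cons, List.map_cons, List.prod_cons, Matrix.mul_assoc]

variable (N I V t) in
/-- The diagonals of the factors `diag(d) + S(y)` of `X_t(y) · S(y)`, from left to right. The index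
`i : Fin N` counts from `0`, so `V_{n-1}^t` and `I_{n-1}^u` are the entries of the `n`-th row in
the numbering from `1`. -/
def todaDiagonals (M : ℕ) : List (Fin N → ℂ) :=
  (fun i ↦ V (i : ℕ) t) :: (List.range M).reverse.map fun (m : ℕ) i ↦ I (i : ℕ) (t + m)

theorem Xtoda_mul_Stoda (hI : ∀ u, Function.Periodic (I · u) N)
    (hV : Function.Periodic (V · t) N) {y : ℂ} (hy : y ≠ 0) (M : ℕ) :
    Xtoda N M I V t y * Stoda N y =
      ((todaDiagonals N I V t M).map fun d ↦ diagonal d + Stoda N y).prod := by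
  rw [Xtoda, Matrix.mul_assoc, Rprod_mul_Stoda hI, ← Matrix.mul_assoc, Ltoda_mul_Stoda hV hy,
    todaDiagonals, List.map_cons, List.prod_cons]

variable (N I V t) in
/-- The diagonal of `γ_{i-1}` for `i = 0, …, M`: the coefficient of `S(y)^i` in `X_t(y) · S(y)`. -/
noncomputable def todaCoeff (M i : ℕ) : Fin N → ℂ :=
  (skewProdAddX (RingHom.pi fun j ↦ Pi.evalRingHom _ (finRotate N j))
    (todaDiagonals N I V t M)).coeff i

theorem Xtoda_mul_Stoda_eq_sum (hI : ∀ u, Function.Periodic (I · u) N)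
    (hV : Function.Periodic (V · t) N) {y : ℂ} (hy : y ≠ 0) (M : ℕ) :
    Xtoda N M I V t y * Stoda N y =
      ∑ i ∈ range (M + 1), diagonal (todaCoeff N I V t M i) * Stoda N y ^ i +
        Stoda N y ^ (M + 1) := by
  have hlen : (todaDiagonals N I V t M).length = M + 1 := by simp [todaDiagonals]
  rw [Xtoda_mul_Stoda hI hV hy, ← hlen]
  exact prod_map_add_eq_sum_add_pow (f := diagonalRingHom (Fin N) ℂ) (Stoda_mul_diagonal N y) _

end Toda

/-- `X_t(y) = γ₋₁ S(y)⁻¹ + γ₀ + γ₁ S(y) + ⋯ + γ_{M-1} S(y)^{M-1} + S(y)^M`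
for diagonal matrices `γ₋₁, γ₀, …, γ_{M-1}` independent of `y`.
Here `γ i` encodes `γ_{i-1}` for `i = 0, 1, …, M`. -/
theorem stmt8 (N M : ℕ) (hN : 0 < N) (hM : 0 < M) (I V : ℤ → ℤ → ℂ)
    (hIper : ∀ n t : ℤ, I (n + N) t = I n t) (hVper : ∀ n t : ℤ, V (n + N) t = V n t)
    (t : ℤ) :
    ∃ γ : ℕ → Matrix (Fin N) (Fin N) ℂ, (∀ i, (γ i).IsDiag) ∧
      ∀ y : ℂ, y ≠ 0 →
        Xtoda N M I V t y =
          γ 0 * (Stoda N y)⁻¹ + (∑ i ∈ Finset.range M, γ (i + 1) * (Stoda N y) ^ i) +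
            (Stoda N y) ^ M := by
  refine ⟨fun i ↦ diagonal (todaCoeff N I V t M i), fun i ↦ isDiag_diagonal _, fun y hy ↦ ?_⟩
  have hinv : Stoda N y * (Stoda N y)⁻¹ = 1 := by
    rw [inv_eq_right_inv (Stoda_mul_Stoda_inv_transpose N hy), Stoda_mul_Stoda_inv_transpose N hy]
  calc Xtoda N M I V t y
      = Xtoda N M I V t y * Stoda N y * (Stoda N y)⁻¹ := by
        rw [Matrix.mul_assoc, hinv, Matrix.mul_one]
    _ = (∑ i ∈ range (M + 1), diagonal (todaCoeff N I V t M i) * Stoda N y ^ i +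
          Stoda N y ^ (M + 1)) * (Stoda N y)⁻¹ := by
        rw [Xtoda_mul_Stoda_eq_sum (fun u n ↦ hIper n u) (fun n ↦ hVper n t) hy]
    _ = _ := sum_range_succ_mul_pow_add_pow_mul hinv _ M
end

section
/- Let I_n^t, V_n^t be a solution of the hpdToda equation. Then the quantity H(t) := Σ_{j=0}^{M−1} Σ_{n=1}^N I_n^{t+j} + Σ_{n=1}^N V_n^t satisfies H(t+1) = H(t) for all t ∈ ℤ; equivalently, Σ_{n=1}^N I_n^{t+M} + Σ_{n=1}^N V_n^{t+1} = Σ_{n=1}^N I_n^t + Σ_{n=1}^N V_n^t for all t. -/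
/-!
The additive Toda equation reads `I_n^{t+M} + V_{n-1}^{t+1} = I_n^t + V_n^t`. Summing it over a
period in `n` gives the second identity, because the sum of a periodic function over a period does
not depend on where the period starts. Sliding the window of `M` time slices from `t` to `t + 1`
replaces the slice `I^t` by `I^{t+M}`, so the second identity is exactly the conservation of `H`.
-/

open Matrix Finset Filter

section SlidingWindow

variable {R A : Type*} [AddMonoidWithOne R]

theorem sum_range_add_one_add_natCast [AddCommMonoid A] (f : R → A) (a : R) (n : ℕ) :
    ∑ i ∈ range n, f (a + 1 + i) + f a = ∑ i ∈ range n, f (a + i) + f (a + n) := by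
  have hshift (i : ℕ) : f (a + 1 + i) = f (a + (i + 1 : ℕ)) := by
    rw [add_assoc, add_comm i 1, Nat.cast_add, Nat.cast_one]
  calc ∑ i ∈ range n, f (a + 1 + i) + f a
      = ∑ i ∈ range (n + 1), f (a + i) := by
        simp only [hshift, sum_range_succ', Nat.cast_zero, add_zero]
    _ = ∑ i ∈ range n, f (a + i) + f (a + n) := sum_range_succ _ n

variable [AddCancelCommMonoid A] {f : R → A} {a : R} {n : ℕ}

theorem sum_range_add_one_add_natCast_add_eq {x y : A} (h : f (a + n) + x = f a + y) :
    ∑ i ∈ range n, f (a + 1 + i) + x = ∑ i ∈ range n, f (a + i) + y := by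
  apply add_right_cancel (b := f a)
  calc ∑ i ∈ range n, f (a + 1 + i) + x + f a
      = ∑ i ∈ range n, f (a + 1 + i) + f a + x := add_right_comm _ _ _
    _ = ∑ i ∈ range n, f (a + i) + (f (a + n) + x) := by
        rw [sum_range_add_one_add_natCast, add_assoc]
    _ = ∑ i ∈ range n, f (a + i) + y + f a := by rw [h, add_comm (f a), add_assoc]

theorem sum_range_add_one_add_natCast_of_periodic (hf : Function.Periodic f n) (a : R) :
    ∑ i ∈ range n, f (a + 1 + i) = ∑ i ∈ range n, f (a + i) := by
  simpa only [add_zero] using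
    sum_range_add_one_add_natCast_add_eq (x := 0) (y := 0) (congrArg (· + 0) (hf a))

end SlidingWindow

section PeriodicExchange

variable {A : Type*} [AddCommGroup A] {N : ℕ}

theorem sum_range_add_sum_range_eq_of_periodic {u u' v v' : ℤ → A}
    (hu' : ∀ n, u' n = u n + v n - v' (n - 1)) (hv' : Function.Periodic v' N) :
    ∑ n ∈ range N, u' (n + 1) + ∑ n ∈ range N, v' (n + 1) =
      ∑ n ∈ range N, u (n + 1) + ∑ n ∈ range N, v (n + 1) := by
  have hlocal (n : ℤ) : u' (n + 1) + v' n = u (n + 1) + v (n + 1) := by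
    rw [hu', add_sub_cancel_right, sub_add_cancel]
  have hshift : ∑ n ∈ range N, v' (n + 1) = ∑ n ∈ range N, v' n := by
    simpa only [zero_add, add_comm (1 : ℤ)] using
      sum_range_add_one_add_natCast_of_periodic hv' 0
  calc ∑ n ∈ range N, u' (n + 1) + ∑ n ∈ range N, v' (n + 1)
      = ∑ n ∈ range N, (u' (n + 1) + v' n) := by rw [hshift, sum_add_distrib]
    _ = ∑ n ∈ range N, (u (n + 1) + v (n + 1)) := sum_congr rfl fun n _ ↦ hlocal n
    _ = ∑ n ∈ range N, u (n + 1) + ∑ n ∈ range N, v (n + 1) := sum_add_distrib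

theorem stmt10_general {M : ℕ} {I V : ℤ → ℤ → A}
    (hI : ∀ n t, I n (t + M) = I n t + V n t - V (n - 1) (t + 1))
    (hV : ∀ t, Function.Periodic (V · t) N) (t : ℤ) :
    (∑ j ∈ range M, ∑ n ∈ range N, I (n + 1) (t + 1 + j) + ∑ n ∈ range N, V (n + 1) (t + 1) =
        ∑ j ∈ range M, ∑ n ∈ range N, I (n + 1) (t + j) + ∑ n ∈ range N, V (n + 1) t) ∧
      (∑ n ∈ range N, I (n + 1) (t + M) + ∑ n ∈ range N, V (n + 1) (t + 1) =
        ∑ n ∈ range N, I (n + 1) t + ∑ n ∈ range N, V (n + 1) t) := by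
  have hslice := sum_range_add_sum_range_eq_of_periodic (fun n ↦ hI n t) (hV (t + 1))
  exact ⟨sum_range_add_one_add_natCast_add_eq (f := fun s ↦ ∑ n ∈ range N, I (n + 1) s) hslice,
    hslice⟩

end PeriodicExchange

/-- the quantity `H(t) = Σ_{j=0}^{M-1} Σ_{n=1}^N I_n^{t+j} + Σ_{n=1}^N V_n^t`
is conserved; equivalently `Σ_n I_n^{t+M} + Σ_n V_n^{t+1} = Σ_n I_n^t + Σ_n V_n^t`. -/
theorem stmt10 (N M : ℕ) (hN : 0 < N) (hM : 0 < M) (I V : ℤ → ℤ → ℂ)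
    (hsol : IsToda N M I V) :
    ∀ t : ℤ,
      ((∑ j ∈ Finset.range M, ∑ n ∈ Finset.range N, I ((n : ℤ) + 1) (t + 1 + j)) +
          ∑ n ∈ Finset.range N, V ((n : ℤ) + 1) (t + 1) =
        (∑ j ∈ Finset.range M, ∑ n ∈ Finset.range N, I ((n : ℤ) + 1) (t + j)) +
          ∑ n ∈ Finset.range N, V ((n : ℤ) + 1) t) ∧
      ((∑ n ∈ Finset.range N, I ((n : ℤ) + 1) (t + M)) +
          ∑ n ∈ Finset.range N, V ((n : ℤ) + 1) (t + 1) =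
        (∑ n ∈ Finset.range N, I ((n : ℤ) + 1) t) +
          ∑ n ∈ Finset.range N, V ((n : ℤ) + 1) t) :=
  fun t ↦ stmt10_general (fun n t ↦ (hsol n t).1) (fun t n ↦ (hsol n t).2.2.2) t
end

section
/- Let I_n^t, V_n^t be a solution of the hpdToda equation. Then for all t ∈ ℤ, (∏_{n=1}^N I_n^{t+M})·(∏_{n=1}^N V_n^{t+1}) = (∏_{n=1}^N I_n^t)·(∏_{n=1}^N V_n^t). -/
/-!
Multiplying the relations `V_n^{t+1} I_n^{t+M} = I_{n+1}^t V_n^t` over one period gives the claim,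
since by periodicity the shift `n ↦ n + 1` only permutes the factors `I_n^t` cyclically.
-/

open Matrix Finset Filter

section CommMonoid

variable {α : Type*} [CommMonoid α] {N : ℕ}

theorem prod_range_comp_add_one_of_eq {f : ℕ → α} (h : f N = f 0) :
    ∏ n ∈ range N, f (n + 1) = ∏ n ∈ range N, f n := by
  cases N with
  | zero => rfl
  | succ k => rw [prod_range_succ, prod_range_succ', h]

theorem prod_range_intCast_add_one_of_periodic {f : ℤ → α} (hf : Function.Periodic f N) :
    ∏ n ∈ range N, f ((n : ℤ) + 1) = ∏ n ∈ range N, f n := by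
  simpa only [Nat.cast_succ] using prod_range_comp_add_one_of_eq (f := fun n : ℕ => f n) hf.eq

theorem stmt11_general {I I' V V' : ℤ → α} (hI : Function.Periodic I N)
    (hexchange : ∀ n, V' n * I' n = I (n + 1) * V n) :
    (∏ n ∈ range N, I' ((n : ℤ) + 1)) * ∏ n ∈ range N, V' ((n : ℤ) + 1) =
      (∏ n ∈ range N, I ((n : ℤ) + 1)) * ∏ n ∈ range N, V ((n : ℤ) + 1) := by
  have hshift : ∏ n ∈ range N, I ((n : ℤ) + 1 + 1) = ∏ n ∈ range N, I ((n : ℤ) + 1) :=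
    prod_range_intCast_add_one_of_periodic (hI.add_const 1)
  calc
    (∏ n ∈ range N, I' ((n : ℤ) + 1)) * ∏ n ∈ range N, V' ((n : ℤ) + 1)
      = ∏ n ∈ range N, V' ((n : ℤ) + 1) * I' ((n : ℤ) + 1) := by
        rw [mul_comm, prod_mul_distrib]
    _ = ∏ n ∈ range N, I ((n : ℤ) + 1 + 1) * V ((n : ℤ) + 1) :=
        prod_congr rfl fun n _ => hexchange (n + 1)
    _ = (∏ n ∈ range N, I ((n : ℤ) + 1)) * ∏ n ∈ range N, V ((n : ℤ) + 1) := by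
        rw [prod_mul_distrib, hshift]

end CommMonoid

/-- `(∏_n I_n^{t+M})·(∏_n V_n^{t+1}) = (∏_n I_n^t)·(∏_n V_n^t)`. -/
theorem stmt11 (N M : ℕ) (hN : 0 < N) (hM : 0 < M) (I V : ℤ → ℤ → ℂ)
    (hsol : IsToda N M I V) :
    ∀ t : ℤ,
      (∏ n ∈ Finset.range N, I ((n : ℤ) + 1) (t + M)) *
          ∏ n ∈ Finset.range N, V ((n : ℤ) + 1) (t + 1) =
        (∏ n ∈ Finset.range N, I ((n : ℤ) + 1) t) *
          ∏ n ∈ Finset.range N, V ((n : ℤ) + 1) t :=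
  fun t => stmt11_general (I := (I · t)) (I' := (I · (t + M))) (V := (V · t)) (V' := (V · (t + 1)))
    (fun n => (hsol n t).2.2.1) (fun n => (hsol n t).2.1)
end

section
/- Let I_n^t, V_n^t be a solution of the hpdToda equation with N = 2 and M = 2 (the system Toda_{2,2}). Then the quantity U_5(t) := I_1^t + I_2^t + I_1^{t+1} + I_2^{t+1} + V_1^t + V_2^t is independent of t: U_5(t+1) = U_5(t) for all t ∈ ℤ. (This is the extra conserved quantity of Toda_{2,2}.) -/
open Matrix Finset Filter

/-!
The `I`-part of the charge sums a window of `M` consecutive times, so one time step changes it by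
`∑ (I_n^{t+M} - I_n^t)`. The first Toda equation turns this into `∑ (V_n^t - V_{n-1}^{t+1})`, and
by periodicity the shift in `n` does not affect the sum: the increment cancels that of `∑ V_n^t`.
-/

section SumRange

variable {R A : Type*} [AddCommMonoidWithOne R] [AddCommGroup A]

theorem sum_range_add_one_sub_sum_range (f : R → A) (a : R) (N : ℕ) :
    ∑ k ∈ range N, f (a + 1 + k) - ∑ k ∈ range N, f (a + k) = f (a + N) - f a := by
  rw [← sum_sub_distrib]
  simpa only [Nat.cast_add, Nat.cast_one, Nat.cast_zero, add_zero, add_assoc, add_comm (1 : R)]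
    using sum_range_sub (fun k : ℕ ↦ f (a + k)) N

theorem sum_range_add_one_of_periodic {f : R → A} {N : ℕ} (hf : Function.Periodic f (N : R))
    (a : R) : ∑ k ∈ range N, f (a + 1 + k) = ∑ k ∈ range N, f (a + k) := by
  rw [← sub_eq_zero, sum_range_add_one_sub_sum_range, hf a, sub_self]

end SumRange

section TodaCharge

variable {A : Type*} [AddCommGroup A]

/-- The linear charge `∑_{n=1}^N (I_n^t + ⋯ + I_n^{t+M-1} + V_n^t)` of `Toda_{N,M}`, which is the
paper's `U₅` when `N = M = 2`. Sites are numbered from `1`, hence the argument `1 + n`. -/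
def todaCharge (N M : ℕ) (I V : ℤ → ℤ → A) (t : ℤ) : A :=
  ∑ n ∈ range N, (∑ k ∈ range M, I (1 + n) (t + k) + V (1 + n) t)

theorem todaCharge_two_two (I V : ℤ → ℤ → A) (t : ℤ) :
    todaCharge 2 2 I V t = I 1 t + I 2 t + I 1 (t + 1) + I 2 (t + 1) + V 1 t + V 2 t := by
  simp only [todaCharge, sum_range_succ, sum_range_zero, Nat.cast_zero, Nat.cast_one, add_zero,
    zero_add, one_add_one_eq_two]
  abel

theorem todaCharge_add_one_sub (N M : ℕ) (I V : ℤ → ℤ → A) (t : ℤ) :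
    todaCharge N M I V (t + 1) - todaCharge N M I V t =
      ∑ n ∈ range N, (I (1 + n) (t + M) - I (1 + n) t + (V (1 + n) (t + 1) - V (1 + n) t)) := by
  rw [todaCharge, todaCharge, ← sum_sub_distrib]
  simp only [add_sub_add_comm, sum_range_add_one_sub_sum_range]

theorem stmt12_general {N M : ℕ} {I V : ℤ → ℤ → A}
    (hI : ∀ n t, I n (t + M) = I n t + V n t - V (n - 1) (t + 1))
    (hV : ∀ t, Function.Periodic (V · t) N) (t : ℤ) :
    todaCharge N M I V (t + 1) = todaCharge N M I V t := by
  have increment (n : ℤ) : I n (t + M) - I n t + (V n (t + 1) - V n t) =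
      V n (t + 1) - V (n - 1) (t + 1) := by
    rw [hI]
    abel
  have shift : ∑ n ∈ range N, V (1 + n) (t + 1) = ∑ n ∈ range N, V (1 + n - 1) (t + 1) := by
    simpa only [zero_add, add_sub_cancel_left] using sum_range_add_one_of_periodic (hV (t + 1)) 0
  rw [← sub_eq_zero, todaCharge_add_one_sub]
  simp only [increment, sum_sub_distrib, shift, sub_self]

end TodaCharge

/-- the extra conserved quantity `U₅ = I_1^t + I_2^t + I_1^{t+1} + I_2^{t+1}
+ V_1^t + V_2^t` of `Toda_{2,2}`. -/
theorem stmt12 (I V : ℤ → ℤ → ℂ) (hsol : IsToda 2 2 I V) :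
    ∀ t : ℤ,
      I 1 (t + 1) + I 2 (t + 1) + I 1 (t + 1 + 1) + I 2 (t + 1 + 1) +
          V 1 (t + 1) + V 2 (t + 1) =
        I 1 t + I 2 t + I 1 (t + 1) + I 2 (t + 1) + V 1 t + V 2 t := by
  intro t
  simpa only [todaCharge_two_two] using
    stmt12_general (fun n t ↦ (hsol n t).1) (fun t n ↦ (hsol n t).2.2.2) t
end

section
/- Let I_1^0, I_2^0, I_1^1, I_2^1, V_1^0, V_2^0, ζ be complex numbers and y a nonzero complex number. Define 2×2 matrices L_0 = [[1, V_2^0/y],[V_1^0, 1]], R_0 = [[ζ, 1],[y, ζ]], R_1 = [[I_1^0, 1],[y, I_2^0]], R_2 = [[I_1^1, 1],[y, I_2^1]], and X_0 := L_0·R_2·R_1·R_0. Then for all x ∈ ℂ, det(X_0 − x·E) = −y³ + y²(ζ² + U_1) − y{(2ζ + U_5)x + U_1ζ² + U_3} + x² − (U_2ζ + U_6)x + U_3ζ² + U_4 − U_4ζ²·y^{−1}, where U_1 = I_1^0I_2^0 + I_1^1I_2^1 + V_1^0V_2^0, U_2 = I_1^0I_1^1 + I_2^0I_2^1 + I_1^0V_2^0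 + I_1^1V_1^0 + I_2^0V_1^0 + I_2^1V_2^0, U_3 = I_1^0I_2^0I_1^1I_2^1 + I_1^1I_2^1V_1^0V_2^0 + V_1^0V_2^0I_1^0I_2^0, U_4 = I_1^0I_2^0I_1^1I_2^1V_1^0V_2^0, U_5 = I_1^0 + I_2^0 + I_1^1 + I_2^1 + V_1^0 + V_2^0, and U_6 = I_1^0I_1^1V_1^0 + I_2^0I_2^1V_2^0. -/
open Matrix

/-!
Put `M(a, b) = !![a, 1; y, b]` and `N = M(0, 0)`, so that `N ^ 2 = y`. Then
`!![1, w / y; v, 1] = y⁻¹ N M(v, w)`, hence `X₀ = y⁻¹ N M(V₁, V₂) R₂ R₁ M(ζ, ζ)`: the variables `V`,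
`I` and `ζ` all play the same role. As `det M(a, b) = ab - y`, the determinant of `X₀` is
`-y⁻¹ ∏ (aᵢbᵢ - y)`. Since `M(a, b) = diag(a, b) + N` and conjugation by `N` swaps the two diagonal
entries, expanding the product in powers of `N` gives the trace: only the terms with one or three
diagonal factors contribute.
-/

section CommRing

variable {R : Type*} [CommRing R]

theorem det_sub_smul_one {n : Type*} [Fintype n] [DecidableEq n] (A : Matrix n n R) (x : R) :
    (A - x • 1).det = (-1) ^ Fintype.card n * A.charpoly.eval x := by
  rw [eval_charpoly, ← det_neg, neg_sub, smul_one_eq_diagonal, scalar_apply]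

theorem det_sub_smul_one_fin_two (A : Matrix (Fin 2) (Fin 2) R) (x : R) :
    (A - x • 1).det = x ^ 2 - A.trace * x + A.det := by
  nontriviality R
  simp [det_sub_smul_one, charpoly_fin_two]

/-- The elementary Lax matrix `M(a, b)` with spectral parameter `y`. All the factors of `X₀` are
expressed through it, including the shift `N = M(0, 0)`. -/
def laxMatrix (y a b : R) : Matrix (Fin 2) (Fin 2) R :=
  !![a, 1; y, b]

theorem det_laxMatrix (y a b : R) : (laxMatrix y a b).det = a * b - y := by
  rw [laxMatrix, det_fin_two_of, one_mul]

theorem laxMatrix_mul_laxMatrix (y a b c d : R) :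
    laxMatrix y a b * laxMatrix y c d = !![a * c + y, a + d; y * (b + c), b * d + y] := by
  simp only [laxMatrix, mul_fin_two]
  ring_nf

theorem inv_smul_laxMatrix_zero_zero_mul (y : Rˣ) (v w : R) :
    (↑y⁻¹ : R) • (laxMatrix (y : R) 0 0 * laxMatrix (y : R) v w) = !![1, w * ↑y⁻¹; v, 1] := by
  simp [laxMatrix_mul_laxMatrix, mul_comm w]

/-- The monodromy matrix `y⁻¹ N M(a₀, b₀) M(a₁, b₁) M(a₂, b₂) M(a₃, b₃)`, where `N = M(0, 0)`. The
prefix `y⁻¹ N M(a₀, b₀)` encodes `L₀`, and `X₀` is the case `a₃ = b₃ = ζ`. -/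
def laxMonodromy (y : Rˣ) (a b : Fin 4 → R) : Matrix (Fin 2) (Fin 2) R :=
  (↑y⁻¹ : R) • (laxMatrix (y : R) 0 0 * laxMatrix (y : R) (a 0) (b 0)) *
    laxMatrix (y : R) (a 1) (b 1) * laxMatrix (y : R) (a 2) (b 2) * laxMatrix (y : R) (a 3) (b 3)

theorem det_laxMonodromy (y : Rˣ) (a b : Fin 4 → R) :
    (laxMonodromy y a b).det = -↑y⁻¹ * ∏ i, (a i * b i - y) := by
  simp only [laxMonodromy, det_mul, det_smul, det_laxMatrix, Fintype.card_fin, Fin.prod_univ_four]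
  linear_combination (-↑y⁻¹ * (a 0 * b 0 - y) * (a 1 * b 1 - y) * (a 2 * b 2 - y) *
    (a 3 * b 3 - y)) * y.inv_mul

theorem neg_inv_mul_prod_sub (y : Rˣ) (p : Fin 4 → R) :
    -↑y⁻¹ * ∏ i, (p i - y) = -y ^ 3 + y ^ 2 * (p 0 + p 1 + p 2 + p 3) -
      y * (p 0 * p 1 + p 0 * p 2 + p 0 * p 3 + p 1 * p 2 + p 1 * p 3 + p 2 * p 3) +
      (p 0 * p 1 * p 2 + p 0 * p 1 * p 3 + p 0 * p 2 * p 3 + p 1 * p 2 * p 3) -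
      p 0 * p 1 * p 2 * p 3 * ↑y⁻¹ := by
  rw [Fin.prod_univ_four]
  linear_combination (-y ^ 3 + y ^ 2 * (p 0 + p 1 + p 2 + p 3) -
      y * (p 0 * p 1 + p 0 * p 2 + p 0 * p 3 + p 1 * p 2 + p 1 * p 3 + p 2 * p 3) +
      (p 0 * p 1 * p 2 + p 0 * p 1 * p 3 + p 0 * p 2 * p 3 + p 1 * p 2 * p 3) : R) * y.inv_mul

-- In the last sum, the `k`-th bracket comes from taking `N` in the `k`-th factor and `diag(a, b)`
-- in the others: once moved to the front, which swaps the entries of the diagonal factors it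
-- passes, `N` cancels against `y⁻¹ N = N⁻¹`.
theorem trace_laxMonodromy (y : Rˣ) (a b : Fin 4 → R) :
    (laxMonodromy y a b).trace = y * ∑ i, (a i + b i) +
      ((a 1 * a 2 * a 3 + b 1 * b 2 * b 3) + (b 0 * a 2 * a 3 + a 0 * b 2 * b 3) +
        (b 0 * b 1 * a 3 + a 0 * a 1 * b 3) + (b 0 * b 1 * b 2 + a 0 * a 1 * a 2)) := by
  rw [laxMonodromy, inv_smul_laxMatrix_zero_zero_mul, Matrix.mul_assoc _ (laxMatrix _ _ _),
    laxMatrix_mul_laxMatrix, laxMatrix, mul_fin_two, mul_fin_two, trace_fin_two_of,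
    Fin.sum_univ_four]
  linear_combination b 0 * ((b 1 + a 2) * a 3 + b 1 * b 2 + y) * y.inv_mul

theorem stmt14_general (I10 I20 I11 I21 V10 V20 ζ : R) (y : Rˣ) (x : R) :
    ((!![1, V20 * ↑y⁻¹; V10, 1] * !![I11, 1; y, I21] * !![I10, 1; y, I20] *
          !![ζ, 1; y, ζ]) - x • (1 : Matrix (Fin 2) (Fin 2) R)).det =
      -y ^ 3 + y ^ 2 * (ζ ^ 2 + (I10 * I20 + I11 * I21 + V10 * V20)) -
        y * ((2 * ζ + (I10 + I20 + I11 + I21 + V10 + V20)) * x +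
          (I10 * I20 + I11 * I21 + V10 * V20) * ζ ^ 2 +
          (I10 * I20 * I11 * I21 + I11 * I21 * V10 * V20 + V10 * V20 * I10 * I20)) +
        x ^ 2 -
        ((I10 * I11 + I20 * I21 + I10 * V20 + I11 * V10 + I20 * V10 + I21 * V20) * ζ +
          (I10 * I11 * V10 + I20 * I21 * V20)) * x +
        (I10 * I20 * I11 * I21 + I11 * I21 * V10 * V20 + V10 * V20 * I10 * I20) * ζ ^ 2 +
        I10 * I20 * I11 * I21 * V10 * V20 -
        I10 * I20 * I11 * I21 * V10 * V20 * ζ ^ 2 * ↑y⁻¹ := by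
  have factorization : !![1, V20 * ↑y⁻¹; V10, 1] * !![I11, 1; (y : R), I21] *
      !![I10, 1; (y : R), I20] * !![ζ, 1; (y : R), ζ] =
        laxMonodromy y ![V10, I11, I10, ζ] ![V20, I21, I20, ζ] := by
    rw [← inv_smul_laxMatrix_zero_zero_mul]
    rfl
  rw [factorization, det_sub_smul_one_fin_two, trace_laxMonodromy, det_laxMonodromy,
    neg_inv_mul_prod_sub _ fun i => _ * _]
  simp only [Fin.sum_univ_four, cons_val]
  ring

end CommRing

/-- the characteristic polynomial of `X₀ = L₀·R₂·R₁·R₀` in the example of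
section 4:
`det(X₀ − xE) = −y³ + y²(ζ² + U₁) − y{(2ζ + U₅)x + U₁ζ² + U₃} + x² − (U₂ζ + U₆)x
  + U₃ζ² + U₄ − U₄ζ²y⁻¹`. -/
theorem stmt14 (I10 I20 I11 I21 V10 V20 ζ : ℂ) (y : ℂ) (hy : y ≠ 0) (x : ℂ) :
    ((!![(1 : ℂ), V20 / y; V10, 1] * !![I11, 1; y, I21] * !![I10, 1; y, I20] *
          !![ζ, 1; y, ζ]) - x • (1 : Matrix (Fin 2) (Fin 2) ℂ)).det =
      -y ^ 3 + y ^ 2 * (ζ ^ 2 + (I10 * I20 + I11 * I21 + V10 * V20)) -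
        y * ((2 * ζ + (I10 + I20 + I11 + I21 + V10 + V20)) * x +
          (I10 * I20 + I11 * I21 + V10 * V20) * ζ ^ 2 +
          (I10 * I20 * I11 * I21 + I11 * I21 * V10 * V20 + V10 * V20 * I10 * I20)) +
        x ^ 2 -
        ((I10 * I11 + I20 * I21 + I10 * V20 + I11 * V10 + I20 * V10 + I21 * V20) * ζ +
          (I10 * I11 * V10 + I20 * I21 * V20)) * x +
        (I10 * I20 * I11 * I21 + I11 * I21 * V10 * V20 + V10 * V20 * I10 * I20) * ζ ^ 2 +
        I10 * I20 * I11 * I21 * V10 * V20 -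
        I10 * I20 * I11 * I21 * V10 * V20 * ζ ^ 2 * y⁻¹ := by
  simpa only [Units.val_inv_eq_inv_val, Units.val_mk0, div_eq_mul_inv] using
    stmt14_general I10 I20 I11 I21 V10 V20 ζ (Units.mk0 y hy) x
end
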